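/- arXiv:1107.0102 — 2 statements merged into one kernel-verified Lean document; each statement's English description precedes it below -/
import Mathlib

section
/- Let Γ be a group acting freely and properly discontinuously on ℂⁿ by biholomorphic automorphisms. Let σ : ℂⁿ × ℂⁿ → ℂⁿ be a map such that for each z ∈ ℂⁿ the map σ_z = σ(z,·) is a bijection of ℂⁿ with σ_z(0) = z, and let λ : Γ → GL(n,ℂ) be a group homomorphism satisfying σ_{γ(z)} ∘ λ_γ ∘ σ_z^{-1} = γ for all z ∈ ℂⁿ and γ ∈ Γ. Then: (i) the formula γ·(z,w) = (γ(z), λ_γ w) defines an action of Γ on ℂⁿ × ℂⁿ by homeomorphisms that is free and properly discontinuous; (ii) σ is equivariant with respect to this action and the original action on ℂⁿ, i.e. σ(γ(z), λ_γ w) = γ(σ(z,w)) for all γ ∈ Γ and z, w ∈ ℂⁿ. -/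
open Matrix

/-- Let `Γ` act freely and properly discontinuously on `ℂⁿ` by biholomorphic automorphisms.
Given `σ : ℂⁿ × ℂⁿ → ℂⁿ` with each `σ_z = σ(z,·)` a bijection satisfying `σ_z(0) = z`, and a
homomorphism `λ : Γ → GL(n,ℂ)` with `σ_{γ(z)} ∘ λ_γ ∘ σ_z⁻¹ = γ`, the formula
`γ • (z,w) = (γ(z), λ_γ w)` defines an action of `Γ` on `ℂⁿ × ℂⁿ` by homeomorphisms which is
free and properly discontinuous, and `σ` is equivariant. -/
theorem extended_action_free_properlyDiscontinuous_and_sigma_equivariant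
    {n : ℕ} {Γ : Type*} [Group Γ] [MulAction Γ (Fin n → ℂ)]
    -- Γ acts by biholomorphic automorphisms
    (hhol : ∀ γ : Γ, Differentiable ℂ (fun z : Fin n → ℂ => γ • z))
    -- the action on ℂⁿ is free and properly discontinuous
    (hfree : ∀ (γ : Γ) (z : Fin n → ℂ), γ • z = z → γ = 1)
    (hpd : ∀ K : Set (Fin n → ℂ), IsCompact K →
      {γ : Γ | ((fun z => γ • z) '' K) ∩ K ≠ ∅}.Finite)
    -- the spray data σ and λ
    (σ : (Fin n → ℂ) → (Fin n → ℂ) → (Fin n → ℂ))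
    (hσbij : ∀ z, Function.Bijective (σ z))
    (hσ0 : ∀ z, σ z 0 = z)
    (lam : Γ →* Matrix.GeneralLinearGroup (Fin n) ℂ)
    -- compatibility: σ_{γ(z)} ∘ λ_γ ∘ σ_z⁻¹ = γ
    (hcompat : ∀ (γ : Γ) (z w : Fin n → ℂ),
      σ (γ • z) ((lam γ : Matrix (Fin n) (Fin n) ℂ) *ᵥ (Function.invFun (σ z) w)) = γ • w)
    -- the extended action γ • (z, w) = (γ(z), λ_γ w)
    (ρ : Γ → (Fin n → ℂ) × (Fin n → ℂ) → (Fin n → ℂ) × (Fin n → ℂ))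
    (hρ : ∀ γ p, ρ γ p = (γ • p.1, (lam γ : Matrix (Fin n) (Fin n) ℂ) *ᵥ p.2)) :
    -- (i) ρ is an action by homeomorphisms, free and properly discontinuous
    (∀ p, ρ 1 p = p) ∧
      (∀ (γ₁ γ₂ : Γ) (p), ρ (γ₁ * γ₂) p = ρ γ₁ (ρ γ₂ p)) ∧
      (∀ γ : Γ, IsHomeomorph (ρ γ)) ∧
      (∀ (γ : Γ) (p), ρ γ p = p → γ = 1) ∧
      (∀ K : Set ((Fin n → ℂ) × (Fin n → ℂ)), IsCompact K →
        {γ : Γ | (ρ γ '' K) ∩ K ≠ ∅}.Finite) ∧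
      -- (ii) σ is equivariant: σ(γ(z), λ_γ w) = γ(σ(z,w))
      (∀ (γ : Γ) (z w : Fin n → ℂ),
        σ (γ • z) ((lam γ : Matrix (Fin n) (Fin n) ℂ) *ᵥ w) = γ • σ z w) := by
  have h1 : ∀ p, ρ 1 p = p := fun p => by simp [hρ]
  have h2 : ∀ (γ₁ γ₂ : Γ) (p), ρ (γ₁ * γ₂) p = ρ γ₁ (ρ γ₂ p) := fun a b p => by
    simp [hρ, mul_smul, Matrix.mulVec_mulVec]
  have hc : ∀ γ, Continuous (ρ γ) := fun γ => by
    have e : ρ γ = fun p => (γ • p.1, (lam γ : Matrix (Fin n) (Fin n) ℂ) *ᵥ p.2) :=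
      funext (hρ γ)
    rw [e]
    exact ((hhol γ).continuous.comp continuous_fst).prodMk
      (Continuous.matrix_mulVec continuous_const continuous_snd)
  refine ⟨h1, h2, fun γ => ?_, fun γ p h => ?_, fun K hK => ?_, fun γ z w => ?_⟩
  · exact (Homeomorph.mk ⟨ρ γ, ρ γ⁻¹, fun p => by rw [← h2, inv_mul_cancel, h1],
      fun p => by rw [← h2, mul_inv_cancel, h1]⟩ (hc γ) (hc γ⁻¹)).isHomeomorph
  · rw [hρ] at h
    exact hfree γ p.1 (congrArg Prod.fst h)
  · refine (hpd (Prod.fst '' K) (hK.image continuous_fst)).subset ?_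
    intro γ hγ
    obtain ⟨q, ⟨p, hp, rfl⟩, hq⟩ := Set.nonempty_iff_ne_empty.mpr hγ
    refine Set.nonempty_iff_ne_empty.mp ⟨γ • p.1, ⟨p.1, ⟨p, hp, rfl⟩, rfl⟩, ?_⟩
    exact ⟨ρ γ p, hq, by rw [hρ]⟩
  · have h := hcompat γ z (σ z w)
    rwa [Function.leftInverse_invFun (hσbij z).1 w] at h
end

section
/- Let F₂ denote the free group on two generators. There exists a family, indexed by a set of cardinality 2^{ℵ₀} (the continuum), of subgroups of the direct product F₂ × F₂ that are pairwise non-isomorphic as abstract groups. -/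
namespace BR

/-- A nontrivial central element of a free group forces rank at most one. -/
theorem subsingleton_of_central {α : Type*} (x : FreeGroup α) (hx : x ≠ 1)
    (hc : ∀ j, FreeGroup.of j * x = x * FreeGroup.of j) : Subsingleton α := by
  classical
  rcases hL : x.toWord with _ | ⟨⟨i, e⟩, L⟩
  · exact absurd (FreeGroup.toWord_eq_nil_iff.1 hL) hx
  · have key : ∀ j, j = i := by
      intro j
      by_contra hji
      have hred : FreeGroup.IsReduced ((i, e) :: L) := hL ▸ FreeGroup.isReduced_toWord
      have h1 : (FreeGroup.of j * x).toWord = (j, true) :: (i, e) :: L := by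
        rw [FreeGroup.toWord_mul, FreeGroup.toWord_of, hL]
        apply FreeGroup.IsReduced.reduce_eq
        simp only [List.cons_append, List.nil_append]
        unfold FreeGroup.IsReduced at hred ⊢
        rw [List.isChain_cons_cons]
        exact ⟨fun h => absurd h hji, hred⟩
      have h2 := FreeGroup.toWord_mul_sublist x (FreeGroup.of j)
      rw [← hc j, h1, hL, FreeGroup.toWord_of] at h2
      have h3 := h2.eq_of_length (by simp)
      simp at h3
      exact hji h3.1.1
    exact ⟨fun a b => (key a).trans (key b).symm⟩

theorem comm_of_subsingleton {α : Type*} [Subsingleton α] (u v : FreeGroup α) :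
    u * v = v * u := by
  rcases isEmpty_or_nonempty α with h | h
  · exact Subsingleton.elim _ _
  · obtain ⟨a⟩ := h
    letI : Unique α := uniqueOfSubsingleton a
    exact FreeGroup.mulEquivIntOfUnique.injective (by
      rw [map_mul, map_mul, mul_comm])

theorem comm_trans {α : Type} (x u v : FreeGroup α) (hx : x ≠ 1)
    (hu : x * u = u * x) (hv : x * v = v * x) : u * v = v * u := by
  let H : Subgroup (FreeGroup α) := Subgroup.centralizer {x}
  have hm : ∀ w, w ∈ H ↔ x * w = w * x := fun w => by
    simp only [H, Subgroup.mem_centralizer_singleton_iff]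
    exact eq_comm
  let e := IsFreeGroup.toFreeGroup H
  let x' : H := ⟨x, (hm x).2 rfl⟩
  have hx' : e x' ≠ 1 := by
    intro h
    rw [map_eq_one_iff e e.injective] at h
    exact hx (congrArg Subtype.val h)
  have := subsingleton_of_central (e x') hx' (by
    intro j
    obtain ⟨w, hw⟩ := e.surjective (FreeGroup.of j)
    rw [← hw, ← map_mul, ← map_mul]
    congr 1
    exact Subtype.ext ((hm w).1 w.2).symm)
  have h := comm_of_subsingleton (e ⟨u, (hm u).2 hu⟩) (e ⟨v, (hm v).2 hv⟩)
  rw [← map_mul, ← map_mul] at h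
  exact congrArg Subtype.val (e.injective h)

abbrev F := FreeGroup (Fin 2)
abbrev W := RegularWreathProduct (Multiplicative ℤ) (Multiplicative ℤ)

noncomputable def A : W := ⟨Pi.mulSingle 1 (Multiplicative.ofAdd 1), 1⟩
noncomputable def B : W := RegularWreathProduct.inl (Multiplicative.ofAdd 1)
noncomputable def φ : F →* W := FreeGroup.lift ![A, B]
def a : F := FreeGroup.of 0
def b : F := FreeGroup.of 1

/-- the `q`-th coordinate -/
noncomputable def c (x : F) (q : ℤ) : ℤ := ((φ x).left (Multiplicative.ofAdd q)).toAdd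

/-- preimage of the base group -/
noncomputable def R : Subgroup F := (RegularWreathProduct.rightHom.comp φ).ker

theorem mem_R {x : F} : x ∈ R ↔ (φ x).right = 1 := Iff.rfl

theorem c_one (q : ℤ) : c 1 q = 0 := by simp [c]

theorem c_mul {x y : F} (hx : x ∈ R) (q : ℤ) : c (x * y) q = c x q + c y q := by
  rw [mem_R] at hx
  simp [c, hx]

theorem c_inv {x : F} (hx : x ∈ R) (q : ℤ) : c x⁻¹ q = - c x q := by
  rw [mem_R] at hx
  simp [c, hx]

theorem c_pow {x : F} (hx : x ∈ R) (q : ℤ) (n : ℕ) : c (x ^ n) q = n * c x q := by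
  induction n with
  | zero => simp [c_one]
  | succ n ih => rw [pow_succ, c_mul (R.pow_mem hx n), ih]; push_cast; ring

theorem φ_t (n : ℕ) : φ (b ^ n * a * (b ^ n)⁻¹) =
    ⟨Pi.mulSingle (Multiplicative.ofAdd (n : ℤ)) (Multiplicative.ofAdd 1), 1⟩ := by
  have ha : φ a = A := by simp [φ, a]
  have hb : φ b = B := by simp [φ, b]
  rw [map_mul, map_mul, map_inv, map_pow, ha, hb, B, ← map_pow]
  ext q
  · simp only [A, RegularWreathProduct.mul_left, RegularWreathProduct.inv_left,
      RegularWreathProduct.left_inl, RegularWreathProduct.right_inl, Pi.mul_apply, Pi.one_apply,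
      Pi.inv_apply, Pi.mulSingle_apply]
    simp only [inv_mul_eq_one, inv_one, mul_one, one_mul, ← ofAdd_nsmul, nsmul_eq_mul]
    simp only [eq_comm]
  · simp [A]

theorem t_mem (n : ℕ) : b ^ n * a * (b ^ n)⁻¹ ∈ R := by rw [mem_R, φ_t]

theorem c_t (n : ℕ) (q : ℤ) : c (b ^ n * a * (b ^ n)⁻¹) q = if q = n then 1 else 0 := by
  rw [c, φ_t]
  simp only [Pi.mulSingle_apply, EmbeddingLike.apply_eq_iff_eq]
  split_ifs <;> rfl

noncomputable def P (S : Set Nat.Primes) : Subgroup (F × F) where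
  carrier := {g | g.1 ∈ R ∧ g.2 ∈ R ∧ ∀ p ∈ S, ((p : ℕ) : ℤ) ∣ c g.1 (p : ℕ) - c g.2 (p : ℕ)}
  one_mem' := ⟨R.one_mem, R.one_mem, fun p _ => by simp [c_one]⟩
  mul_mem' := by
    rintro g h ⟨h1, h2, h3⟩ ⟨k1, k2, k3⟩
    refine ⟨R.mul_mem h1 k1, R.mul_mem h2 k2, fun p hp => ?_⟩
    rw [Prod.fst_mul, Prod.snd_mul, c_mul h1, c_mul h2, add_sub_add_comm]
    exact dvd_add (h3 p hp) (k3 p hp)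
  inv_mem' := by
    rintro g ⟨h1, h2, h3⟩
    refine ⟨R.inv_mem h1, R.inv_mem h2, fun p hp => ?_⟩
    rw [Prod.fst_inv, Prod.snd_inv, c_inv h1, c_inv h2, ← neg_sub']
    exact (dvd_neg).2 (h3 p hp)

noncomputable def K (S : Set Nat.Primes) : Subgroup F where
  carrier := {x | x ∈ R ∧ ∀ p ∈ S, ((p : ℕ) : ℤ) ∣ c x (p : ℕ)}
  one_mem' := ⟨R.one_mem, fun p _ => by simp [c_one]⟩
  mul_mem' := by
    rintro g h ⟨h1, h3⟩ ⟨k1, k3⟩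
    refine ⟨R.mul_mem h1 k1, fun p hp => ?_⟩
    rw [c_mul h1]
    exact dvd_add (h3 p hp) (k3 p hp)
  inv_mem' := by
    rintro g ⟨h1, h3⟩
    refine ⟨R.inv_mem h1, fun p hp => ?_⟩
    rw [c_inv h1]
    exact (dvd_neg).2 (h3 p hp)

def T (G : Type*) [Group G] : Subgroup G :=
  Subgroup.closure {g | ∃ u v : G, g * u = u * g ∧ g * v = v * g ∧ u * v ≠ v * u}

def Tors (G : Type*) [Group G] (p : ℕ) : Prop := ∃ g : G, g ^ p ∈ T G ∧ g ∉ T G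

theorem T_map {G H : Type*} [Group G] [Group H] (e : G ≃* H) {g : G} (hg : g ∈ T G) :
    e g ∈ T H := by
  have : T G ≤ (T H).comap (e : G →* H) := by
    refine (Subgroup.closure_le _).2 ?_
    rintro g ⟨u, v, h1, h2, h3⟩
    refine Subgroup.subset_closure ⟨e u, e v, ?_, ?_, ?_⟩
    · simpa using congrArg e h1
    · simpa using congrArg e h2
    · intro h
      rw [← map_mul, ← map_mul] at h
      exact h3 (e.injective h)
  exact this hg

theorem Tors_map {G H : Type*} [Group G] [Group H] (e : G ≃* H) {p : ℕ} (h : Tors G p) :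
    Tors H p := by
  obtain ⟨g, h1, h2⟩ := h
  refine ⟨e g, by simpa using T_map e h1, fun h => h2 ?_⟩
  simpa using T_map e.symm h

theorem t_mem_K (S : Set Nat.Primes) (n : ℕ) (hn : n < 2) : b ^ n * a * (b ^ n)⁻¹ ∈ K S := by
  refine ⟨t_mem n, fun p _ => ?_⟩
  rw [c_t, if_neg]
  · exact dvd_zero _
  · have := p.2.two_le
    norm_cast
    intro h
    rw [h] at this
    omega

theorem t_ne : (b ^ 0 * a * (b ^ 0)⁻¹) * (b ^ 1 * a * (b ^ 1)⁻¹) ≠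
    (b ^ 1 * a * (b ^ 1)⁻¹) * (b ^ 0 * a * (b ^ 0)⁻¹) := by
  unfold a b
  decide

theorem left_mem_P {S : Set Nat.Primes} {x : F} (hx : x ∈ K S) : (x, (1 : F)) ∈ P S :=
  ⟨hx.1, R.one_mem, fun p hp => by simpa [c_one] using hx.2 p hp⟩

theorem right_mem_P {S : Set Nat.Primes} {x : F} (hx : x ∈ K S) : ((1 : F), x) ∈ P S :=
  ⟨R.one_mem, hx.1, fun p hp => by simpa [c_one] using hx.2 p hp⟩

theorem mem_T (S : Set Nat.Primes) (g : P S) : g ∈ T (P S) ↔ g.1.1 ∈ K S ∧ g.1.2 ∈ K S := by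
  constructor
  · intro hg
    have : T (P S) ≤ ((K S).prod (K S)).comap (P S).subtype := by
      refine (Subgroup.closure_le _).2 ?_
      rintro ⟨⟨x, y⟩, hx, hy, hxy⟩ ⟨⟨⟨u1, u2⟩, hu⟩, ⟨⟨v1, v2⟩, hv⟩, h1, h2, h3⟩
      simp only [Subtype.ext_iff, Subgroup.coe_mul, Prod.mk_mul_mk, Prod.mk.injEq, ne_eq,
        not_and] at h1 h2 h3
      change x ∈ K S ∧ y ∈ K S
      by_cases hx1 : x = 1
      · subst hx1
        exact ⟨(K S).one_mem, hy, fun p hp => by simpa [c_one] using hxy p hp⟩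
      by_cases hy1 : y = 1
      · subst hy1
        exact ⟨⟨hx, fun p hp => by simpa [c_one] using hxy p hp⟩, (K S).one_mem⟩
      exact absurd (comm_trans y _ _ hy1 h1.2 h2.2) (h3 (comm_trans x _ _ hx1 h1.1 h2.1))
    exact this hg
  · rintro ⟨hx, hy⟩
    have hg : g = ⟨_, left_mem_P hx⟩ * ⟨_, right_mem_P hy⟩ := by
      apply Subtype.ext
      simp
    rw [hg]
    refine (T (P S)).mul_mem (Subgroup.subset_closure ?_) (Subgroup.subset_closure ?_)
    · refine ⟨⟨_, right_mem_P (t_mem_K S 0 (by norm_num))⟩,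
        ⟨_, right_mem_P (t_mem_K S 1 (by norm_num))⟩, ?_, ?_, ?_⟩
      · apply Subtype.ext; simp
      · apply Subtype.ext; simp
      · intro h
        exact t_ne (congrArg (fun z : P S => z.1.2) h)
    · refine ⟨⟨_, left_mem_P (t_mem_K S 0 (by norm_num))⟩,
        ⟨_, left_mem_P (t_mem_K S 1 (by norm_num))⟩, ?_, ?_, ?_⟩
      · apply Subtype.ext; simp
      · apply Subtype.ext; simp
      · intro h
        exact t_ne (congrArg (fun z : P S => z.1.1) h)

theorem Tors_P (S : Set Nat.Primes) (p : Nat.Primes) : Tors (P S) p ↔ p ∈ S := by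
  constructor
  · rintro ⟨g, h1, h2⟩
    by_contra hp
    rw [mem_T] at h1 h2
    have key : ∀ x : F, x ∈ R → x ^ (p : ℕ) ∈ K S → x ∈ K S := by
      intro x hx hxp
      refine ⟨hx, fun q hq => ?_⟩
      have := hxp.2 q hq
      rw [c_pow hx] at this
      refine IsCoprime.dvd_of_dvd_mul_left ?_ this
      rw [Nat.isCoprime_iff_coprime]
      refine (Nat.coprime_primes q.2 p.2).2 ?_
      intro h
      exact hp ((Subtype.ext h : q = p) ▸ hq)
    exact h2 ⟨key _ g.2.1 h1.1, key _ g.2.2.1 h1.2⟩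
  · intro hp
    have hR := t_mem p
    refine ⟨⟨(b ^ (p : ℕ) * a * (b ^ (p : ℕ))⁻¹, b ^ (p : ℕ) * a * (b ^ (p : ℕ))⁻¹),
      hR, hR, fun q _ => by simp⟩, ?_, ?_⟩
    · rw [mem_T]
      have : (b ^ (p : ℕ) * a * (b ^ (p : ℕ))⁻¹) ^ (p : ℕ) ∈ K S := by
        refine ⟨R.pow_mem hR _, fun q _ => ?_⟩
        rw [c_pow hR, c_t]
        split_ifs with h
        · rw [h]; exact dvd_mul_right _ _
        · simp
      exact ⟨this, this⟩
    · rw [mem_T]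
      rintro ⟨h, -⟩
      have := h.2 p hp
      simp only [c_t, if_true] at this
      have h2 := Int.natCast_dvd_natCast.1 (by simpa using this : ((p : ℕ) : ℤ) ∣ ((1 : ℕ) : ℤ))
      exact p.2.one_lt.ne' (Nat.dvd_one.1 h2)

end BR

/-- There exists a family, indexed by a set of cardinality `2^ℵ₀` (the continuum), of subgroups
of `F₂ × F₂` (the direct product of two free groups of rank two) that are pairwise
non-isomorphic as abstract groups. -/
theorem continuum_many_nonisomorphic_subgroups_of_F2_prod_F2 :
    ∃ (I : Type) (f : I → Subgroup (FreeGroup (Fin 2) × FreeGroup (Fin 2))),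
      Cardinal.mk I = Cardinal.continuum ∧
      ∀ i j : I, i ≠ j → IsEmpty (f i ≃* f j) := by
  refine ⟨Set Nat.Primes, BR.P, ?_, ?_⟩
  · rw [Cardinal.mk_set, Cardinal.mk_eq_aleph0, Cardinal.two_power_aleph0]
  · intro S S' h
    refine ⟨fun e => h ?_⟩
    ext p
    rw [← BR.Tors_P, ← BR.Tors_P]
    exact ⟨BR.Tors_map e, BR.Tors_map e.symm⟩
end
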